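/- Exhaustive application of the unit and conflict rules is symmetry-preserving: if F* is obtained from a CNF formula F by exhaustively applying the unit rule and the conflict rule, then Aut_syn(F)_{{Lit(F*)}} = Aut_syn(F) and Aut_syn(F)↓_{Lit(F*)} ⊆ Aut_syn(F*). -/

import Mathlib

/-- A literal over a variable type `V`: a variable or its negation. -/
inductive Lit (V : Type) where
  | pos : V → Lit V
  | neg : V → Lit V
deriving DecidableEq

variable {V : Type} [DecidableEq V]

/-- Negation of a literal (so that double negation is the identity). -/
def Lit.negate : Lit V → Lit V
  | .pos v => .neg v
  | .neg v => .pos v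

/-- The underlying variable of a literal. -/
def Lit.var : Lit V → V
  | .pos v => v
  | .neg v => v

/-- A clause is a finite set of literals. -/
abbrev Clause (V : Type) := Finset (Lit V)

/-- A CNF formula is a finite set of clauses. -/
abbrev CNF (V : Type) := Finset (Clause V)

/-- `Var(F)`: the variables occurring in a formula. -/
def CNF.vars (F : CNF V) : Finset V := Finset.sup F (fun C => Finset.image Lit.var C)

/-- `Lit(F) = Var(F) ∪ {v̄ : v ∈ Var(F)}`. -/
def CNF.lits (F : CNF V) : Finset (Lit V) :=
  Finset.image Lit.pos (CNF.vars F) ∪ Finset.image Lit.neg (CNF.vars F)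

/-- The value of a literal under a complete assignment (given on the variables,
which determines a consistent complete assignment on all literals). -/
def Lit.val (σ : V → Bool) : Lit V → Bool
  | .pos v => σ v
  | .neg v => !(σ v)

/-- `C[σ]`: delete from `C` every literal mapped to `⊥` by `σ`
(i.e. keep `l` with `¬l ∉ σ`). -/
def Clause.reduce (σ : V → Bool) (C : Clause V) : Clause V :=
  Finset.filter (fun l => Lit.val σ (Lit.negate l) = false) C

/-- `F[σ]`: delete every clause containing a literal mapped to `⊤` by `σ`
(for a complete assignment: every clause containing no false literal is kept)
and delete from each remaining clause every literal mapped to `⊥`. -/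
def CNF.reduce (F : CNF V) (σ : V → Bool) : CNF V :=
  Finset.image (Clause.reduce σ) (Finset.filter (fun C => ∀ l ∈ C, Lit.val σ l = false) F)

/-- Apply a map on literals elementwise to clauses and formulas. -/
def CNF.map (φ : Lit V → Lit V) (F : CNF V) : CNF V :=
  Finset.image (fun C => Finset.image φ C) F

/-- `φ` is a syntactic symmetry of `F`: a bijection of `Lit(F)` respecting
negation with `φ(F) = F`. -/
def IsSynSym (F : CNF V) (φ : Lit V → Lit V) : Prop :=
  Set.BijOn φ (CNF.lits F : Set (Lit V)) (CNF.lits F : Set (Lit V)) ∧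
  (∀ l ∈ CNF.lits F, φ (Lit.negate l) = Lit.negate (φ l)) ∧
  CNF.map φ F = F

/-- `φ` is a semantic symmetry of `F`: a bijection of `Lit(F)` respecting
negation with `F[σ] = φ(F)[σ]` for every complete assignment `σ`. -/
def IsSemSym (F : CNF V) (φ : Lit V → Lit V) : Prop :=
  Set.BijOn φ (CNF.lits F : Set (Lit V)) (CNF.lits F : Set (Lit V)) ∧
  (∀ l ∈ CNF.lits F, φ (Lit.negate l) = Lit.negate (φ l)) ∧
  ∀ σ : V → Bool, CNF.reduce F σ = CNF.reduce (CNF.map φ F) σ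

/-- Extend a map defined on the literal set `S` by the identity outside `S`. -/
def extendId (S : Finset (Lit V)) (φ : Lit V → Lit V) : Lit V → Lit V :=
  fun l => if l ∈ S then φ l else l

/-- `F[l ↦ ⊤]`: delete every clause containing `l` and delete `l̄` from every
remaining clause. -/
def CNF.assignTrue (F : CNF V) (l : Lit V) : CNF V :=
  Finset.image (fun C => Finset.erase C (Lit.negate l)) (Finset.filter (fun C => l ∉ C) F)

/-- One (proper) application of the unit rule (`{l} ∈ F` is replaced by
`F[l ↦ ⊤]`) or the conflict rule (`∅ ∈ F` reduces `F` to `{∅}`). -/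
def UCStep (F F' : CNF V) : Prop :=
  F' ≠ F ∧
    ((∃ l : Lit V, ({l} : Clause V) ∈ F ∧ F' = CNF.assignTrue F l) ∨
      ((∅ : Clause V) ∈ F ∧ F' = {(∅ : Clause V)}))

/-!
The unit and conflict rules refer to literals only through negation and membership, so they commute
with every injective map of literals that respects negation. Extending a symmetry `φ` of `F` by the
identity gives such a map. It carries an exhaustive reduction from `F` to `F*` to one from
`φ(F) = F` to `φ(F*)`, and confluence of the rules forces `φ(F*) = F*`.
Confluence comes from a diamond: assignments to literals `l` and `m ≠ l̄` commute, while the unit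
clauses `{l}` and `{l̄}` together leave the empty clause whichever is propagated first.
-/

theorem eq_of_reflTransGen_of_diamond {α : Type*} {r : α → α → Prop}
    (diamond : ∀ a b c, r a b → r a c → Relation.Join (Relation.ReflGen r) b c) {a b c : α}
    (hab : Relation.ReflTransGen r a b) (hac : Relation.ReflTransGen r a c)
    (hb : ∀ x, ¬ r b x) (hc : ∀ x, ¬ r c x) : b = c := by
  obtain ⟨d, hbd, hcd⟩ := Relation.church_rosser
    (fun a b c h h' => (diamond a b c h h').imp fun _ hd => ⟨hd.1, hd.2.to_reflTransGen⟩) hab hac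
  rw [Relation.reflTransGen_iff_eq hb] at hbd
  rw [Relation.reflTransGen_iff_eq hc] at hcd
  exact hbd.symm.trans hcd

namespace Lit

theorem negate_involutive {V : Type} : Function.Involutive (negate : Lit V → Lit V) := by
  rintro (v | v) <;> rfl

theorem negate_ne_self {V : Type} (l : Lit V) : l.negate ≠ l := by
  cases l <;> simp [negate]

theorem var_eq_var_iff {V : Type} {l m : Lit V} : l.var = m.var ↔ l = m ∨ l = m.negate := by
  cases l <;> cases m <;> simp [var, negate]

end Lit

theorem extendId_apply_of_mem {S : Finset (Lit V)} {φ : Lit V → Lit V} {l : Lit V} (hl : l ∈ S) :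
    extendId S φ l = φ l :=
  if_pos hl

theorem extendId_apply_of_notMem {S : Finset (Lit V)} {φ : Lit V → Lit V} {l : Lit V}
    (hl : l ∉ S) : extendId S φ l = l :=
  if_neg hl

theorem extendId_injective {S : Finset (Lit V)} {φ : Lit V → Lit V} (hinj : Set.InjOn φ S)
    (hmaps : Set.MapsTo φ S S) : Function.Injective (extendId S φ) := by
  refine (Set.injective_piecewise_iff (s := (S : Set (Lit V))) (f := φ) (g := id)).2
    ⟨hinj, Function.injective_id.injOn, ?_⟩
  rintro l hl m hm rfl
  exact hm (hmaps hl)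

theorem extendId_commute_negate {S : Finset (Lit V)} {φ : Lit V → Lit V}
    (hS : ∀ l, l.negate ∈ S ↔ l ∈ S) (hφ : ∀ l ∈ S, φ l.negate = (φ l).negate) :
    Function.Commute (extendId S φ) Lit.negate := by
  intro l
  by_cases hl : l ∈ S
  · rw [extendId_apply_of_mem hl, extendId_apply_of_mem ((hS l).2 hl), hφ l hl]
  · rw [extendId_apply_of_notMem hl, extendId_apply_of_notMem (mt (hS l).1 hl)]

namespace CNF

theorem mem_lits {F : CNF V} {l : Lit V} : l ∈ F.lits ↔ ∃ C ∈ F, l ∈ C ∨ l.negate ∈ C := by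
  have mem_iff_var : l ∈ F.lits ↔ l.var ∈ F.vars := by
    cases l <;> simp [lits, Lit.var]
  simp only [mem_iff_var, vars, Finset.mem_sup, Finset.mem_image, Lit.var_eq_var_iff, and_or_left,
    exists_or, exists_eq_right]

theorem negate_mem_lits {F : CNF V} {l : Lit V} : l.negate ∈ F.lits ↔ l ∈ F.lits := by
  simp only [mem_lits, Lit.negate_involutive l, or_comm]

theorem mem_lits_of_mem {F : CNF V} {C : Clause V} {l : Lit V} (hC : C ∈ F) (hl : l ∈ C) :
    l ∈ F.lits :=
  mem_lits.2 ⟨C, hC, .inl hl⟩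

theorem mem_map {φ : Lit V → Lit V} {F : CNF V} {D : Clause V} :
    D ∈ F.map φ ↔ ∃ C ∈ F, C.image φ = D :=
  Finset.mem_image

theorem mem_assignTrue {F : CNF V} {l : Lit V} {D : Clause V} :
    D ∈ F.assignTrue l ↔ ∃ C ∈ F, l ∉ C ∧ C.erase l.negate = D := by
  simp only [assignTrue, Finset.mem_image, Finset.mem_filter, and_assoc]

theorem lits_assignTrue_subset (F : CNF V) (l : Lit V) : (F.assignTrue l).lits ⊆ F.lits := by
  intro m hm
  obtain ⟨D, hD, hmD⟩ := mem_lits.1 hm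
  obtain ⟨C, hC, -, rfl⟩ := mem_assignTrue.1 hD
  exact mem_lits.2 ⟨C, hC, hmD.imp Finset.mem_of_mem_erase Finset.mem_of_mem_erase⟩

theorem empty_mem_assignTrue {F : CNF V} (hF : ∅ ∈ F) (l : Lit V) : ∅ ∈ F.assignTrue l :=
  mem_assignTrue.2 ⟨∅, hF, Finset.notMem_empty l, Finset.erase_empty _⟩

theorem empty_mem_assignTrue_of_singleton_negate_mem {F : CNF V} {l : Lit V}
    (hl : {l.negate} ∈ F) : ∅ ∈ F.assignTrue l :=
  mem_assignTrue.2 ⟨_, hl, by simpa using l.negate_ne_self.symm, Finset.erase_singleton _⟩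

theorem singleton_mem_assignTrue {F : CNF V} {l m : Lit V} (hm : {m} ∈ F) (hml : m ≠ l)
    (hml' : m ≠ l.negate) : {m} ∈ F.assignTrue l :=
  mem_assignTrue.2 ⟨{m}, hm, by simpa using hml.symm,
    Finset.erase_eq_of_notMem (by simpa using hml'.symm)⟩

theorem mem_assignTrue_assignTrue {F : CNF V} {l m : Lit V} (hml : m ≠ l.negate) {D : Clause V} :
    D ∈ (F.assignTrue l).assignTrue m ↔
      ∃ C ∈ F, l ∉ C ∧ m ∉ C ∧ (C.erase l.negate).erase m.negate = D := by
  simp only [mem_assignTrue, ↓existsAndEq, and_true, Finset.mem_erase, hml, ne_eq,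
    not_false_eq_true, true_and, and_assoc]

theorem assignTrue_comm (F : CNF V) {l m : Lit V} (hml : m ≠ l.negate) :
    (F.assignTrue l).assignTrue m = (F.assignTrue m).assignTrue l := by
  have hlm : l ≠ m.negate := fun h => hml (Lit.negate_involutive.eq_iff.1 h.symm)
  ext D
  simp only [mem_assignTrue_assignTrue hml, mem_assignTrue_assignTrue hlm,
    Finset.erase_right_comm (a := l.negate), and_left_comm]

theorem map_congr {F : CNF V} {f g : Lit V → Lit V} (hfg : Set.EqOn f g F.lits) :
    F.map f = F.map g :=
  Finset.image_congr fun _ hC => Finset.image_congr fun _ hl => hfg (mem_lits_of_mem hC hl)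

theorem lits_map {F : CNF V} {φ : Lit V → Lit V}
    (hφ : ∀ l ∈ F.lits, φ l.negate = (φ l).negate) : (F.map φ).lits = F.lits.image φ := by
  ext m
  simp only [mem_lits (F := F.map φ), mem_map, Finset.mem_image]
  constructor
  · rintro ⟨_, ⟨C, hC, rfl⟩, hm | hm⟩ <;> obtain ⟨l, hl, hlm⟩ := Finset.mem_image.1 hm
    · exact ⟨l, mem_lits_of_mem hC hl, hlm⟩
    · have hlF := mem_lits_of_mem hC hl
      exact ⟨l.negate, negate_mem_lits.2 hlF, by rw [hφ l hlF, hlm, Lit.negate_involutive m]⟩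
  · rintro ⟨l, hlF, rfl⟩
    obtain ⟨C, hC, hl⟩ := mem_lits.1 hlF
    refine ⟨_, ⟨C, hC, rfl⟩, hl.imp (Finset.mem_image_of_mem φ) fun hl => ?_⟩
    exact hφ l hlF ▸ Finset.mem_image_of_mem φ hl

theorem empty_mem_map {F : CNF V} {f : Lit V → Lit V} : ∅ ∈ F.map f ↔ ∅ ∈ F := by
  simp only [mem_map, Finset.image_eq_empty, exists_eq_right]

theorem map_singleton_empty (f : Lit V → Lit V) : CNF.map f {∅} = {∅} := by
  simp only [map, Finset.image_singleton, Finset.image_empty]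

theorem map_injective {f : Lit V → Lit V} (hf : Function.Injective f) :
    Function.Injective (CNF.map f) :=
  Finset.image_injective (Finset.image_injective hf)

theorem singleton_mem_map {F : CNF V} {f : Lit V → Lit V} (hf : Function.Injective f)
    {m : Lit V} : {m} ∈ F.map f ↔ ∃ l, {l} ∈ F ∧ f l = m := by
  rw [mem_map]
  constructor
  · rintro ⟨C, hC, hCm⟩
    obtain ⟨l, -, rfl⟩ := Finset.mem_image.1 (hCm ▸ Finset.mem_singleton_self m)
    rw [← Finset.image_singleton f, (Finset.image_injective hf).eq_iff] at hCm
    exact ⟨l, hCm ▸ hC, rfl⟩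
  · rintro ⟨l, hl, rfl⟩
    exact ⟨{l}, hl, Finset.image_singleton f l⟩

theorem map_assignTrue {f : Lit V → Lit V} (hf : Function.Injective f)
    (hneg : Function.Commute f Lit.negate) (F : CNF V) (l : Lit V) :
    (F.assignTrue l).map f = (F.map f).assignTrue (f l) := by
  ext D
  simp only [mem_map, mem_assignTrue, ↓existsAndEq, and_true, and_assoc, hf.mem_finset_image,
    Finset.image_erase hf, hneg.eq]

end CNF

/-- One application of the unit rule or the conflict rule which, unlike in `UCStep`, may leave the
formula unchanged; reasoning about it avoids tracking whether an application is proper. -/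
def UCRule (F G : CNF V) : Prop :=
  (∃ l : Lit V, {l} ∈ F ∧ G = F.assignTrue l) ∨ (∅ ∈ F ∧ G = {∅})

namespace UCRule

variable {F G H : CNF V}

theorem unit {l : Lit V} (hl : {l} ∈ F) : UCRule F (F.assignTrue l) :=
  .inl ⟨l, hl, rfl⟩

theorem conflict (hF : ∅ ∈ F) : UCRule F {∅} :=
  .inr ⟨hF, rfl⟩

theorem reflGen_ucStep (h : UCRule F G) : Relation.ReflGen UCStep F G := by
  rcases eq_or_ne G F with rfl | hne
  · exact .refl
  · exact .single ⟨hne, h⟩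

theorem lits_subset (h : UCRule F G) : G.lits ⊆ F.lits := by
  rcases h with ⟨l, -, rfl⟩ | ⟨-, rfl⟩
  · exact F.lits_assignTrue_subset l
  · exact Finset.empty_subset _

theorem join_assignTrue_assignTrue {l m : Lit V} (hl : {l} ∈ F) (hm : {m} ∈ F)
    (hml : m ≠ l) : Relation.Join UCRule (F.assignTrue l) (F.assignTrue m) := by
  rcases eq_or_ne m l.negate with rfl | hml'
  · have hl' : {l.negate.negate} ∈ F := by rwa [Lit.negate_involutive l]
    exact ⟨{∅}, conflict (CNF.empty_mem_assignTrue_of_singleton_negate_mem hm),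
      conflict (CNF.empty_mem_assignTrue_of_singleton_negate_mem hl')⟩
  · have hlm' : l ≠ m.negate := fun h => hml' (Lit.negate_involutive.eq_iff.1 h.symm)
    refine ⟨_, unit (CNF.singleton_mem_assignTrue hm hml hml'), ?_⟩
    rw [F.assignTrue_comm hml']
    exact unit (CNF.singleton_mem_assignTrue hl hml.symm hlm')

theorem join_of_ne (hG : UCRule F G) (hH : UCRule F H) (hne : G ≠ H) :
    Relation.Join UCRule G H := by
  have conflict_self : UCRule ({∅} : CNF V) {∅} := conflict (Finset.mem_singleton_self ∅)
  rcases hG with ⟨l, hl, rfl⟩ | ⟨hF, rfl⟩ <;> rcases hH with ⟨m, hm, rfl⟩ | ⟨hF', rfl⟩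
  · exact join_assignTrue_assignTrue hl hm (by rintro rfl; exact hne rfl)
  · exact ⟨{∅}, conflict (CNF.empty_mem_assignTrue hF' l), conflict_self⟩
  · exact ⟨{∅}, conflict_self, conflict (CNF.empty_mem_assignTrue hF m)⟩
  · exact absurd rfl hne

theorem map_left_iff {f : Lit V → Lit V} (hf : Function.Injective f)
    (hneg : Function.Commute f Lit.negate) :
    UCRule (F.map f) G ↔ ∃ G', UCRule F G' ∧ G'.map f = G := by
  constructor
  · rintro (⟨m, hm, rfl⟩ | ⟨hF, rfl⟩)
    · obtain ⟨l, hl, rfl⟩ := (CNF.singleton_mem_map hf).1 hm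
      exact ⟨_, unit hl, CNF.map_assignTrue hf hneg F l⟩
    · exact ⟨_, conflict (CNF.empty_mem_map.1 hF), CNF.map_singleton_empty f⟩
  · rintro ⟨G', ⟨l, hl, rfl⟩ | ⟨hF, rfl⟩, rfl⟩
    · rw [CNF.map_assignTrue hf hneg]
      exact unit ((CNF.singleton_mem_map hf).2 ⟨l, hl, rfl⟩)
    · rw [CNF.map_singleton_empty]
      exact conflict (CNF.empty_mem_map.2 hF)

end UCRule

namespace UCStep

variable {F G H : CNF V}

theorem join_reflGen (hG : UCStep F G) (hH : UCStep F H) :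
    Relation.Join (Relation.ReflGen UCStep) G H := by
  rcases eq_or_ne G H with rfl | hne
  · exact ⟨G, .refl, .refl⟩
  · obtain ⟨D, hGD, hHD⟩ := UCRule.join_of_ne hG.2 hH.2 hne
    exact ⟨D, hGD.reflGen_ucStep, hHD.reflGen_ucStep⟩

theorem lits_subset_of_reflTransGen (h : Relation.ReflTransGen UCStep F G) :
    G.lits ⊆ F.lits := by
  induction h with
  | refl => exact subset_rfl
  | tail _ hstep ih => exact (UCRule.lits_subset hstep.2).trans ih

theorem map_left_iff {f : Lit V → Lit V} (hf : Function.Injective f)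
    (hneg : Function.Commute f Lit.negate) :
    UCStep (F.map f) G ↔ ∃ G', UCStep F G' ∧ G'.map f = G := by
  change G ≠ F.map f ∧ UCRule (F.map f) G ↔ ∃ G', (G' ≠ F ∧ UCRule F G') ∧ G'.map f = G
  rw [UCRule.map_left_iff hf hneg]
  constructor
  · rintro ⟨hne, G', hG', rfl⟩
    exact ⟨G', ⟨ne_of_apply_ne _ hne, hG'⟩, rfl⟩
  · rintro ⟨G', ⟨hne, hG'⟩, rfl⟩
    exact ⟨(CNF.map_injective hf).ne hne, G', hG', rfl⟩

theorem map_eq_self_of_reflTransGen {f : Lit V → Lit V} (hf : Function.Injective f)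
    (hneg : Function.Commute f Lit.negate) (hF : F.map f = F)
    (hsteps : Relation.ReflTransGen UCStep F G) (hdone : ∀ G', ¬ UCStep G G') :
    G.map f = G := by
  have hsteps_map : Relation.ReflTransGen UCStep F (G.map f) := by
    have hlift : Relation.ReflTransGen UCStep (F.map f) (G.map f) :=
      Relation.ReflTransGen.lift (CNF.map f)
        (fun _ _ hstep => (map_left_iff hf hneg).2 ⟨_, hstep, rfl⟩) F G hsteps
    rwa [hF] at hlift
  have hdone_map : ∀ G', ¬ UCStep (G.map f) G' := by
    rintro _ hstep
    obtain ⟨G', hG', -⟩ := (map_left_iff hf hneg).1 hstep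
    exact hdone G' hG'
  exact eq_of_reflTransGen_of_diamond (fun _ _ _ => join_reflGen) hsteps_map hsteps hdone_map hdone

end UCStep

namespace IsSynSym

variable {F G : CNF V} {φ : Lit V → Lit V}

theorem of_lits_subset (h : IsSynSym F φ) (hGF : G.lits ⊆ F.lits) (hG : G.map φ = G) :
    IsSynSym G φ := by
  have hneg : ∀ l ∈ G.lits, φ l.negate = (φ l).negate := fun l hl => h.2.1 l (hGF hl)
  have himage : φ '' G.lits = G.lits := by
    rw [← Finset.coe_image, ← CNF.lits_map hneg, hG]
  have hbij : Set.BijOn φ G.lits G.lits := by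
    simpa only [himage] using (h.1.injOn.mono (Finset.coe_subset.2 hGF)).bijOn_image
  exact ⟨hbij, hneg, hG⟩

theorem of_reflTransGen_ucStep (h : IsSynSym F φ) (hsteps : Relation.ReflTransGen UCStep F G)
    (hdone : ∀ G', ¬ UCStep G G') : IsSynSym G φ := by
  have hGF : G.lits ⊆ F.lits := UCStep.lits_subset_of_reflTransGen hsteps
  have ⟨hbij, hneg, hF⟩ := h
  have hext : Set.EqOn (extendId F.lits φ) φ F.lits := fun _ => extendId_apply_of_mem
  have hG : G.map (extendId F.lits φ) = G :=
    UCStep.map_eq_self_of_reflTransGen (extendId_injective hbij.injOn hbij.mapsTo)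
      (extendId_commute_negate (fun _ => CNF.negate_mem_lits) hneg)
      ((CNF.map_congr hext).trans hF) hsteps hdone
  exact h.of_lits_subset hGF <|
    (CNF.map_congr (hext.mono (Finset.coe_subset.2 hGF))).symm.trans hG

end IsSynSym

/-- Exhaustive application of the unit and conflict rules is
symmetry-preserving: if `F*` is obtained from `F` by exhaustively applying
unit and conflict, then every syntactic symmetry of `F` setwise stabilizes
`Lit(F*)` (so `Aut_syn(F)_{{Lit(F*)}} = Aut_syn(F)`) and its restriction to
`Lit(F*)` is a syntactic symmetry of `F*`
(so `Aut_syn(F)↓_{Lit(F*)} ⊆ Aut_syn(F*)`). -/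
theorem exhaustive_unit_conflict_symmetry_preserving (F Fs : CNF V)
    (hsteps : Relation.ReflTransGen UCStep F Fs)
    (hdone : ∀ F' : CNF V, ¬ UCStep Fs F') :
    (∀ φ : Lit V → Lit V, IsSynSym F φ →
        φ '' (CNF.lits Fs : Set (Lit V)) = (CNF.lits Fs : Set (Lit V))) ∧
    (∀ φ : Lit V → Lit V, IsSynSym F φ →
        φ '' (CNF.lits Fs : Set (Lit V)) = (CNF.lits Fs : Set (Lit V)) →
        IsSynSym Fs φ) := by
  have hsym : ∀ φ : Lit V → Lit V, IsSynSym F φ → IsSynSym Fs φ :=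
    fun _ hφ => hφ.of_reflTransGen_ucStep hsteps hdone
  exact ⟨fun φ hφ => (hsym φ hφ).1.image_eq, fun φ hφ _ => hsym φ hφ⟩
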